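/- Let d ≥ 1, κ > 0, and let T ⊂ ℝ^d be a nondegenerate d-simplex with diameter h_T and shape parameter μ := h_T/ρ_T. There exist constants c, C > 0 depending only on d and μ such that for every affine function r : ℝ^d → ℝ: c · min{h_T, κ^{−1}} · ‖r‖_{L²(T)} ≤ sup{ ∫_T r φ : φ ∈ T(int T), ‖φ‖_{E,int T} ≤ 1 } ≤ C · min{h_T, κ^{−1}} · ‖r‖_{L²(T)}. -/

import Mathlib

open MeasureTheory Metric Set
open scoped ENNReal RealInnerProductSpace NNReal Classical

noncomputable section

abbrev Euc (d : ℕ) : Type := EuclideanSpace ℝ (Fin d)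

/-- `T(ω)`: Lipschitz functions on `ℝ^d` vanishing identically outside `ω`. -/
def IsTest {d : ℕ} (ω : Set (Euc d)) (φ : Euc d → ℝ) : Prop :=
  (∃ L : ℝ≥0, LipschitzWith L φ) ∧ ∀ x ∉ ω, φ x = 0

/-- `∫_ω |∇φ|²`. -/
def gradSq {d : ℕ} (ω : Set (Euc d)) (φ : Euc d → ℝ) : ℝ :=
  ∫ x in ω, ‖gradient φ x‖ ^ 2

/-- `∫_ω φ²`. -/
def sqIntg {d : ℕ} (ω : Set (Euc d)) (φ : Euc d → ℝ) : ℝ :=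
  ∫ x in ω, (φ x) ^ 2

/-- squared energy norm `‖φ‖_{E,ω}² = ∫_ω |∇φ|² + κ² ∫_ω φ²`. -/
def energySq {d : ℕ} (κ : ℝ) (ω : Set (Euc d)) (φ : Euc d → ℝ) : ℝ :=
  gradSq ω φ + κ ^ 2 * sqIntg ω φ

/-- local dual norm `‖Λ‖_{*,ω} = sup {Λφ : φ ∈ T(ω), ‖φ‖_{E,ω} ≤ 1}`. -/
def dualNorm {d : ℕ} (κ : ℝ) (ω : Set (Euc d)) (Λ : (Euc d → ℝ) → ℝ) : ℝ≥0∞ :=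
  ⨆ φ ∈ {φ : Euc d → ℝ | IsTest ω φ ∧ energySq κ ω φ ≤ 1}, ENNReal.ofReal (Λ φ)

/-- inradius: supremum of radii of balls contained in `s`. -/
def inradius {d : ℕ} (s : Set (Euc d)) : ℝ :=
  sSup {r : ℝ | ∃ c, Metric.ball c r ⊆ s}

/-- the simplex spanned by an affine basis. -/
def simT {d : ℕ} (B : AffineBasis (Fin (d+1)) ℝ (Euc d)) : Set (Euc d) :=
  convexHull ℝ (Set.range ⇑B)

/-- the face of the simplex opposite to the vertex `z`. -/
def simFace {d : ℕ} (B : AffineBasis (Fin (d+1)) ℝ (Euc d)) (z : Fin (d+1)) : Set (Euc d) :=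
  convexHull ℝ (⇑B '' {y | y ≠ z})

/-- the standard `d`-simplex. -/
def Δstd (d : ℕ) : Set (Euc d) := {x | (∀ i, 0 ≤ x i) ∧ ∑ i, x i ≤ 1}

/-- the element bubble of the standard simplex. -/
def elemBubble (d : ℕ) (x : Euc d) : ℝ := (1 - ∑ i, x i) * ∏ i, x i

/-!
Upper bound: integrating by parts against `x ↦ ⟪v, x⟫ - ⟪v, p⟫`, with `v` a unit vector and `p ∈ T`,
gives Friedrichs' inequality `‖φ‖ ≤ 2 h_T ‖∇φ‖`, so a test function of energy at most `1` has
`‖φ‖ ≤ 2 min {h_T, κ⁻¹}`, and Cauchy–Schwarz concludes.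

Lower bound: let `p` maximise `|r|` over `T` and let `ball c ρ ⊆ T` with `ρ` comparable to `h_T`.
By convexity the homothety of ratio `1/4` about `p` carries this ball into `T`, onto a ball of
radius `ρ / 4` on which `r` has constant sign and `|r| ≥ 3/4 |r p| - 1/4 |r p|`. A Lipschitz cutoff
supported there, used in place of `r` times the element bubble, has pairing at least of order
`|r p| |T|` and energy norm at most of order `(h_T⁻¹ + κ) |T|^{1/2}`, while
`‖r‖ ≤ |r p| |T|^{1/2}`.
-/

section Analysis

lemma abs_integral_mul_le_sqrt_mul_sqrt {α : Type*} [MeasurableSpace α] {μ : Measure α}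
    {f g : α → ℝ} (hf : MemLp f 2 μ) (hg : MemLp g 2 μ) :
    |∫ x, f x * g x ∂μ| ≤ √(∫ x, f x ^ 2 ∂μ) * √(∫ x, g x ^ 2 ∂μ) := by
  have holder := integral_mul_norm_le_Lp_mul_Lq (μ := μ) (f := f) (g := g)
    Real.HolderConjugate.two_two (by simpa using hf) (by simpa using hg)
  calc |∫ x, f x * g x ∂μ|
      ≤ ∫ x, ‖f x‖ * ‖g x‖ ∂μ := by
        simpa only [norm_mul, Real.norm_eq_abs] using
          norm_integral_le_integral_norm (μ := μ) fun x => f x * g x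
    _ ≤ √(∫ x, f x ^ 2 ∂μ) * √(∫ x, g x ^ 2 ∂μ) := by
        simpa [Real.sqrt_eq_rpow] using holder

lemma lipschitzWith_sq_of_abs_le {α : Type*} [PseudoMetricSpace α] {f : α → ℝ} {L M : ℝ≥0}
    (hf : LipschitzWith L f) (hM : ∀ x, |f x| ≤ M) :
    LipschitzWith (2 * M * L) (fun x => f x ^ 2) := by
  refine LipschitzWith.of_dist_le_mul fun x y => ?_
  have hsum : |f x + f y| ≤ 2 * M := (abs_add_le _ _).trans (by linarith [hM x, hM y])
  calc dist (f x ^ 2) (f y ^ 2)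
      = |f x + f y| * dist (f x) (f y) := by
        rw [Real.dist_eq, Real.dist_eq, ← abs_mul]; ring_nf
    _ ≤ 2 * M * (L * dist x y) := by gcongr; exact hf.dist_le_mul x y
    _ = (2 * M * L : ℝ≥0) * dist x y := by push_cast; ring

lemma integral_sq_eq_neg_integral_mul_fderiv {E : Type*} [NormedAddCommGroup E] [NormedSpace ℝ E]
    [FiniteDimensional ℝ E] [MeasurableSpace E] [BorelSpace E] {μ : Measure E}
    [μ.IsAddHaarMeasure] {φ : E → ℝ} {L : ℝ≥0} (hφ : LipschitzWith L φ)
    (hsupp : HasCompactSupport φ) (ℓ : E →L[ℝ] ℝ) {v : E} (hv : ℓ v = 1) (a : ℝ) :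
    ∫ x, φ x ^ 2 ∂μ = -∫ x, 2 * φ x * fderiv ℝ φ x v * (ℓ x - a) ∂μ := by
  obtain ⟨M, hM⟩ := hsupp.exists_bound_of_continuous hφ.continuous
  have hsq : LipschitzWith (2 * M.toNNReal * L) (fun x => φ x ^ 2) :=
    lipschitzWith_sq_of_abs_le hφ fun x => (hM x).trans M.le_coe_toNNReal
  have hlip : LipschitzWith (‖ℓ‖₊ + 0) (fun x => ℓ x - a) := ℓ.lipschitz.sub (.const a)
  have hlineDeriv : ∀ x, lineDeriv ℝ (fun x => ℓ x - a) x v = 1 := fun x => by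
    rw [(ℓ.differentiableAt.sub_const a).lineDeriv_eq_fderiv, fderiv_sub_const, ℓ.fderiv, hv]
  calc ∫ x, φ x ^ 2 ∂μ
      = ∫ x, lineDeriv ℝ (fun x => ℓ x - a) x v * φ x ^ 2 ∂μ := by simp only [hlineDeriv, one_mul]
    _ = ∫ x, lineDeriv ℝ (fun x => φ x ^ 2) x (-v) * (ℓ x - a) ∂μ :=
        hlip.integral_lineDeriv_mul_eq hsq (hsupp.comp_left (g := (· ^ 2)) (by simp)) v
    _ = ∫ x, -(2 * φ x * fderiv ℝ φ x v * (ℓ x - a)) ∂μ := by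
        refine integral_congr_ae ?_
        filter_upwards [hφ.ae_differentiableAt] with x hx
        rw [(hx.fun_pow 2).lineDeriv_eq_fderiv, fderiv_fun_pow 2 hx]
        simp
    _ = -∫ x, 2 * φ x * fderiv ℝ φ x v * (ℓ x - a) ∂μ := integral_neg _

lemma norm_gradient_eq_norm_fderiv {F : Type*} [NormedAddCommGroup F] [InnerProductSpace ℝ F]
    [CompleteSpace F] (φ : F → ℝ) (x : F) : ‖gradient φ x‖ = ‖fderiv ℝ φ x‖ :=
  LinearIsometryEquiv.norm_map _ _

lemma measureReal_le_pow_mul_closedBall {E : Type*} [NormedAddCommGroup E] [NormedSpace ℝ E]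
    [FiniteDimensional ℝ E] [MeasurableSpace E] [BorelSpace E] (μ : Measure E)
    [μ.IsAddHaarMeasure] {T : Set E} (hT : Bornology.IsBounded T) {q : E} (hq : q ∈ T)
    {K δ : ℝ} (hK : 0 ≤ K) (hδ : 0 ≤ δ) (hdiam : diam T ≤ K * δ) :
    μ.real T ≤ K ^ Module.finrank ℝ E * μ.real (closedBall q δ) := by
  have hsub : T ⊆ closedBall q (K * δ) := fun x hx =>
    (dist_le_diam_of_mem hT hx hq).trans hdiam
  calc μ.real T ≤ μ.real (closedBall q (K * δ)) :=
        measureReal_mono hsub measure_closedBall_lt_top.ne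
    _ = K ^ Module.finrank ℝ E * μ.real (closedBall q δ) := by
        rw [Measure.addHaar_real_closedBall μ q (by positivity),
          Measure.addHaar_real_closedBall μ q hδ]
        ring

lemma mul_measureReal_le_setIntegral_mul_thickenedIndicator {α : Type*} [PseudoMetricSpace α]
    [MeasurableSpace α] [OpensMeasurableSpace α] {μ : Measure α} {S T : Set α} {f : α → ℝ}
    {m δ : ℝ} (hm : 0 ≤ m) (hδ : 0 < δ) (hS : MeasurableSet S) (hST : S ⊆ T) (hT : μ T ≠ ∞)
    (hf : IntegrableOn f T μ) (hmf : ∀ x ∈ thickening δ S, m ≤ f x) :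
    m * μ.real S ≤ ∫ x in T, f x * thickenedIndicator hδ S x ∂μ := by
  have hint : IntegrableOn (fun x => f x * thickenedIndicator hδ S x) T μ := by
    refine hf.mul_bdd (c := 1) (by fun_prop) (.of_forall fun x => ?_)
    simpa using thickenedIndicator_le_one hδ S x
  have hnonneg : ∀ x, 0 ≤ f x * thickenedIndicator hδ S x := fun x => by
    by_cases hx : x ∈ thickening δ S
    · exact mul_nonneg (hm.trans (hmf x hx)) NNReal.zero_le_coe
    · simp [thickenedIndicator_zero hδ S hx]
  calc m * μ.real S
      ≤ ∫ x in S, f x * thickenedIndicator hδ S x ∂μ := by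
        refine setIntegral_ge_of_const_le_real hS (measure_ne_top_of_subset hST hT)
          (fun x hx => ?_) (hint.mono_set hST)
        simpa [thickenedIndicator_one hδ S hx] using hmf x (self_subset_thickening hδ S hx)
    _ ≤ ∫ x in T, f x * thickenedIndicator hδ S x ∂μ :=
        setIntegral_mono_set hint (.of_forall hnonneg) (.of_forall hST)

lemma exists_ball_subset_half_abs_le {E : Type*} [NormedAddCommGroup E] [NormedSpace ℝ E]
    {T : Set E} (hT : Convex ℝ T) {c p : E} {ρ : ℝ} (hball : ball c ρ ⊆ T) (hp : p ∈ T)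
    (f : E →ᵃ[ℝ] ℝ) (hmax : ∀ x ∈ T, |f x| ≤ |f p|) :
    ∃ (q : E) (s : ℝ), |s| = 1 ∧ ball q (ρ / 4) ⊆ T ∧
      ∀ x ∈ ball q (ρ / 4), |f p| / 2 ≤ s * f x := by
  obtain ⟨s, hs, hsp⟩ : ∃ s : ℝ, |s| = 1 ∧ |f p| = s * f p :=
    RCLike.exists_norm_eq_mul_self (f p)
  set q := AffineMap.lineMap p c (1 / 4 : ℝ) with hq
  have hrepr : ∀ x ∈ ball q (ρ / 4), ∃ z ∈ T, AffineMap.lineMap p z (1 / 4 : ℝ) = x := by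
    intro x hx
    refine ⟨c + (4 : ℝ) • (x - q), hball ?_, ?_⟩
    · rw [mem_ball_iff_norm] at hx ⊢
      rw [add_sub_cancel_left, norm_smul, Real.norm_ofNat]
      linarith
    · rw [hq, AffineMap.lineMap_apply_module, AffineMap.lineMap_apply_module]
      module
  refine ⟨q, s, hs, fun x hx => ?_, fun x hx => ?_⟩ <;> obtain ⟨z, hz, rfl⟩ := hrepr x hx
  · exact hT.lineMap_mem hp hz ⟨by norm_num, by norm_num⟩
  · have hsz : -|f p| ≤ s * f z := by
      refine neg_le_of_abs_le ?_
      rw [abs_mul, hs, one_mul]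
      exact hmax z hz
    calc |f p| / 2 ≤ 3 / 4 * |f p| + 1 / 4 * (s * f z) := by linarith
      _ = s * f (AffineMap.lineMap p z (1 / 4 : ℝ)) := by
        rw [f.apply_lineMap, AffineMap.lineMap_apply_ring', hsp]
        ring

lemma min_mul_sqrt_inv_sq_add_sq_le {h κ δ K : ℝ} (hh : 0 ≤ h) (hκ : 0 < κ) (hδ : 0 < δ)
    (hK : h ≤ K * δ) : min h κ⁻¹ * √(δ⁻¹ ^ 2 + κ ^ 2) ≤ √(K ^ 2 + 1) := by
  have hδ_le : min h κ⁻¹ * δ⁻¹ ≤ K :=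
    (mul_inv_le_iff₀ hδ).2 ((min_le_left _ _).trans hK)
  have hκ_le : min h κ⁻¹ * κ ≤ 1 := (le_inv_mul_iff₀' hκ).1 (by simp)
  refine Real.le_sqrt_of_sq_le ?_
  calc (min h κ⁻¹ * √(δ⁻¹ ^ 2 + κ ^ 2)) ^ 2
      = (min h κ⁻¹ * δ⁻¹) ^ 2 + (min h κ⁻¹ * κ) ^ 2 := by
        rw [mul_pow, Real.sq_sqrt (by positivity)]
        ring
    _ ≤ K ^ 2 + 1 ^ 2 := by gcongr
    _ = K ^ 2 + 1 := by rw [one_pow]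

end Analysis

section Energy

variable {d : ℕ} {κ : ℝ} {ω T : Set (Euc d)} {φ : Euc d → ℝ}

lemma sqIntg_nonneg : 0 ≤ sqIntg ω φ := integral_nonneg fun _ => sq_nonneg _

lemma gradSq_nonneg : 0 ≤ gradSq ω φ := integral_nonneg fun _ => sq_nonneg _

lemma energySq_const_smul (c : ℝ) : energySq κ ω (c • φ) = c ^ 2 * energySq κ ω φ := by
  simp only [energySq, gradSq, sqIntg, norm_gradient_eq_norm_fderiv, fderiv_const_smul_field,
    Pi.smul_apply, norm_smul, smul_eq_mul, mul_pow, integral_const_mul, Real.norm_eq_abs, sq_abs]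
  ring

lemma sqIntg_le_of_abs_le {f : Euc d → ℝ} {M : ℝ} (hω : volume ω ≠ ∞) (hM : ∀ x ∈ ω, |f x| ≤ M) :
    sqIntg ω f ≤ M ^ 2 * volume.real ω := by
  refine (le_abs_self _).trans (norm_setIntegral_le_of_norm_le_const (f := fun x => f x ^ 2)
    hω.lt_top fun x hx => ?_)
  rw [norm_pow]
  exact pow_le_pow_left₀ (norm_nonneg _) (hM x hx) 2

lemma sqrt_sqIntg_le_of_abs_le {f : Euc d → ℝ} {M : ℝ} (hω : volume ω ≠ ∞) (hM₀ : 0 ≤ M)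
    (hM : ∀ x ∈ ω, |f x| ≤ M) : √(sqIntg ω f) ≤ M * √(volume.real ω) :=
  calc √(sqIntg ω f) ≤ √(M ^ 2 * volume.real ω) := Real.sqrt_le_sqrt (sqIntg_le_of_abs_le hω hM)
    _ = M * √(volume.real ω) := by rw [Real.sqrt_mul (sq_nonneg M), Real.sqrt_sq hM₀]

lemma energySq_le_of_lipschitzWith {L : ℝ≥0} {M : ℝ} (hω : volume ω ≠ ∞) (hφ : LipschitzWith L φ)
    (hM : ∀ x ∈ ω, |φ x| ≤ M) :
    energySq κ ω φ ≤ (L ^ 2 + κ ^ 2 * M ^ 2) * volume.real ω := by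
  have hgrad : gradSq ω φ ≤ L ^ 2 * volume.real ω :=
    sqIntg_le_of_abs_le (f := fun x => ‖gradient φ x‖) hω fun x _ => by
      rw [abs_norm, norm_gradient_eq_norm_fderiv]
      exact norm_fderiv_le_of_lipschitz ℝ hφ
  calc energySq κ ω φ ≤ L ^ 2 * volume.real ω + κ ^ 2 * (M ^ 2 * volume.real ω) := by
        unfold energySq
        gcongr
        exact sqIntg_le_of_abs_le hω hM
    _ = (L ^ 2 + κ ^ 2 * M ^ 2) * volume.real ω := by ring

namespace IsTest

lemma continuous (hφ : IsTest ω φ) : Continuous φ := hφ.1.choose_spec.continuous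

lemma hasCompactSupport (hφ : IsTest ω φ) (hω : Bornology.IsBounded ω) : HasCompactSupport φ :=
  HasCompactSupport.intro hω.isCompact_closure fun x hx => hφ.2 x fun h => hx (subset_closure h)

lemma memLp_two (hφ : IsTest ω φ) (hω : Bornology.IsBounded ω) : MemLp φ 2 volume :=
  hφ.continuous.memLp_of_hasCompactSupport (hφ.hasCompactSupport hω)

lemma memLp_two_norm_gradient (hφ : IsTest ω φ) (hω : Bornology.IsBounded ω) :
    MemLp (fun x => ‖gradient φ x‖) 2 (volume.restrict ω) := by
  obtain ⟨L, hL⟩ := hφ.1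
  have : IsFiniteMeasure (volume.restrict ω) := isFiniteMeasure_restrict.2 hω.measure_lt_top.ne
  simp only [norm_gradient_eq_norm_fderiv]
  refine MemLp.of_bound (measurable_fderiv ℝ φ).norm.aestronglyMeasurable L (.of_forall fun x => ?_)
  simpa using norm_fderiv_le_of_lipschitz ℝ hL

lemma const_smul (hφ : IsTest ω φ) (c : ℝ) : IsTest ω (c • φ) := by
  obtain ⟨⟨L, hL⟩, hzero⟩ := hφ
  exact ⟨⟨_, (lipschitzWith_smul c).comp hL⟩, fun x hx => by simp [hzero x hx]⟩

lemma sqIntg_eq_of_subset (hφ : IsTest ω φ) (hωT : ω ⊆ T) : sqIntg T φ = sqIntg ω φ := by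
  unfold sqIntg
  rw [setIntegral_eq_integral_of_forall_compl_eq_zero fun x hx => by simp [hφ.2 x (mt (@hωT x) hx)],
    setIntegral_eq_integral_of_forall_compl_eq_zero fun x hx => by simp [hφ.2 x hx]]

lemma sqIntg_le_mul_setIntegral_abs_mul_norm_gradient (hφ : IsTest ω φ) (hω : Bornology.IsBounded ω)
    (hmeas : MeasurableSet ω) {v : Euc d} (hv : ‖v‖ = 1) {a h : ℝ}
    (hwidth : ∀ x ∈ ω, |⟪v, x⟫ - a| ≤ h) :
    sqIntg ω φ ≤ 2 * h * ∫ x in ω, |φ x| * ‖gradient φ x‖ := by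
  obtain ⟨L, hL⟩ := hφ.1
  have hbyParts := integral_sq_eq_neg_integral_mul_fderiv (μ := volume) hL
    (hφ.hasCompactSupport hω) (innerSL ℝ v) (v := v) (by simp [hv]) a
  have hmajorant : IntegrableOn (fun x => 2 * h * (|φ x| * ‖gradient φ x‖)) ω :=
    (((hφ.memLp_two hω).restrict ω).norm.integrable_mul
      (hφ.memLp_two_norm_gradient hω)).const_mul _
  have hbound : ∀ x ∈ ω, ‖2 * φ x * fderiv ℝ φ x v * (innerSL ℝ v x - a)‖
      ≤ 2 * h * (|φ x| * ‖gradient φ x‖) := fun x hx => by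
    have hderiv : |fderiv ℝ φ x v| ≤ ‖gradient φ x‖ := by
      simpa [hv, norm_gradient_eq_norm_fderiv] using (fderiv ℝ φ x).le_opNorm v
    calc ‖2 * φ x * fderiv ℝ φ x v * (innerSL ℝ v x - a)‖
        = 2 * |φ x| * |fderiv ℝ φ x v| * |⟪v, x⟫ - a| := by simp
      _ ≤ 2 * |φ x| * ‖gradient φ x‖ * h := by gcongr; exact hwidth x hx
      _ = 2 * h * (|φ x| * ‖gradient φ x‖) := by ring
  calc sqIntg ω φ = ∫ x, φ x ^ 2 :=
        setIntegral_eq_integral_of_forall_compl_eq_zero fun x hx => by simp [hφ.2 x hx]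
    _ = -∫ x in ω, 2 * φ x * fderiv ℝ φ x v * (innerSL ℝ v x - a) := by
        rw [hbyParts, setIntegral_eq_integral_of_forall_compl_eq_zero fun x hx => by
          simp [hφ.2 x hx]]
    _ ≤ ∫ x in ω, 2 * h * (|φ x| * ‖gradient φ x‖) :=
        (neg_le_abs _).trans (norm_integral_le_of_norm_le hmajorant
          (ae_restrict_of_forall_mem hmeas hbound))
    _ = 2 * h * ∫ x in ω, |φ x| * ‖gradient φ x‖ := integral_const_mul _ _

lemma sqrt_sqIntg_le_diam_mul_sqrt_gradSq [NeZero d] (hφ : IsTest ω φ)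
    (hω : Bornology.IsBounded ω) (hmeas : MeasurableSet ω) :
    √(sqIntg ω φ) ≤ 2 * diam ω * √(gradSq ω φ) := by
  rcases ω.eq_empty_or_nonempty with rfl | ⟨p, hp⟩
  · simp [sqIntg]
  obtain ⟨v, hv⟩ := exists_norm_eq (Euc d) zero_le_one
  have hwidth : ∀ x ∈ ω, |⟪v, x⟫ - ⟪v, p⟫| ≤ diam ω := fun x hx =>
    calc |⟪v, x⟫ - ⟪v, p⟫| = |⟪v, x - p⟫| := by rw [inner_sub_right]
      _ ≤ ‖v‖ * ‖x - p‖ := abs_real_inner_le_norm v (x - p)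
      _ = dist x p := by rw [hv, one_mul, dist_eq_norm]
      _ ≤ diam ω := dist_le_diam_of_mem hω hx hp
  have hcauchySchwarz : ∫ x in ω, |φ x| * ‖gradient φ x‖ ≤ √(sqIntg ω φ) * √(gradSq ω φ) := by
    simpa only [sqIntg, gradSq, Real.norm_eq_abs, sq_abs] using (le_abs_self _).trans
      (abs_integral_mul_le_sqrt_mul_sqrt ((hφ.memLp_two hω).restrict ω).norm
        (hφ.memLp_two_norm_gradient hω))
  have hsq : √(sqIntg ω φ) * √(sqIntg ω φ) ≤ √(sqIntg ω φ) * (2 * diam ω * √(gradSq ω φ)) :=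
    calc √(sqIntg ω φ) * √(sqIntg ω φ) = sqIntg ω φ := Real.mul_self_sqrt sqIntg_nonneg
      _ ≤ 2 * diam ω * ∫ x in ω, |φ x| * ‖gradient φ x‖ :=
        hφ.sqIntg_le_mul_setIntegral_abs_mul_norm_gradient hω hmeas hv hwidth
      _ ≤ 2 * diam ω * (√(sqIntg ω φ) * √(gradSq ω φ)) := by gcongr
      _ = √(sqIntg ω φ) * (2 * diam ω * √(gradSq ω φ)) := by ring
  rcases (Real.sqrt_nonneg (sqIntg ω φ)).eq_or_lt with hzero | hpos
  · rw [← hzero]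
    positivity
  · exact le_of_mul_le_mul_left hsq hpos

lemma sqrt_sqIntg_le_min [NeZero d] (hκ : 0 < κ) (hφ : IsTest ω φ) (hω : Bornology.IsBounded ω)
    (hmeas : MeasurableSet ω) (henergy : energySq κ ω φ ≤ 1) :
    √(sqIntg ω φ) ≤ 2 * min (diam ω) κ⁻¹ := by
  have hgrad : gradSq ω φ ≤ 1 :=
    le_trans (le_add_of_nonneg_right (mul_nonneg (sq_nonneg κ) sqIntg_nonneg)) henergy
  have hmass : κ ^ 2 * sqIntg ω φ ≤ 1 := le_trans (le_add_of_nonneg_left gradSq_nonneg) henergy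
  rw [mul_min_of_nonneg _ _ zero_le_two]
  refine le_min ?_ ?_
  · exact (hφ.sqrt_sqIntg_le_diam_mul_sqrt_gradSq hω hmeas).trans
      (mul_le_of_le_one_right (by positivity) (Real.sqrt_le_one.2 hgrad))
  · have hsqrt : √(sqIntg ω φ) ≤ κ⁻¹ := by
      rw [Real.sqrt_le_left (by positivity), inv_pow, ← one_div, le_div_iff₀' (by positivity)]
      exact hmass
    linarith [inv_pos.2 hκ]

end IsTest

lemma dualNorm_setIntegral_mul_le [NeZero d] (hκ : 0 < κ) (hω : Bornology.IsBounded ω)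
    (hmeas : MeasurableSet ω) (hωT : ω ⊆ T) {r : Euc d → ℝ} (hr : MemLp r 2 (volume.restrict T)) :
    dualNorm κ ω (fun φ => ∫ x in T, r x * φ x)
      ≤ ENNReal.ofReal (2 * min (diam ω) κ⁻¹ * √(sqIntg T r)) := by
  refine iSup₂_le fun φ ⟨hφ, henergy⟩ => ENNReal.ofReal_le_ofReal ?_
  calc ∫ x in T, r x * φ x ≤ √(sqIntg T r) * √(sqIntg T φ) :=
        (le_abs_self _).trans
          (abs_integral_mul_le_sqrt_mul_sqrt hr ((hφ.memLp_two hω).restrict T))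
    _ ≤ √(sqIntg T r) * (2 * min (diam ω) κ⁻¹) := by
        rw [hφ.sqIntg_eq_of_subset hωT]
        gcongr
        exact hφ.sqrt_sqIntg_le_min hκ hω hmeas henergy
    _ = 2 * min (diam ω) κ⁻¹ * √(sqIntg T r) := mul_comm _ _

lemma ofReal_abs_div_sqrt_le_dualNorm {Λ : (Euc d → ℝ) → ℝ}
    (hΛ : ∀ (c : ℝ) (φ : Euc d → ℝ), Λ (c • φ) = c * Λ φ) (hφ : IsTest ω φ) {e : ℝ} (he : 0 < e)
    (henergy : energySq κ ω φ ≤ e) :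
    ENNReal.ofReal (|Λ φ| / √e) ≤ dualNorm κ ω Λ := by
  obtain ⟨s, hs, hsφ⟩ : ∃ s : ℝ, |s| = 1 ∧ |Λ φ| = s * Λ φ :=
    RCLike.exists_norm_eq_mul_self (Λ φ)
  have hnormalized : energySq κ ω ((s / √e) • φ) ≤ 1 := by
    rw [energySq_const_smul, div_pow, ← sq_abs s, hs, one_pow, Real.sq_sqrt he.le,
      one_div_mul_eq_div, div_le_one he]
    exact henergy
  have hval : Λ ((s / √e) • φ) = |Λ φ| / √e := by rw [hΛ, hsφ]; ring
  rw [← hval]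
  exact le_iSup₂ (f := fun ψ (_ : ψ ∈ {φ | IsTest ω φ ∧ energySq κ ω φ ≤ 1}) =>
    ENNReal.ofReal (Λ ψ)) _ ⟨hφ.const_smul _, hnormalized⟩

lemma ofReal_mul_div_sqrt_le_dualNorm {S : Set (Euc d)} {r : Euc d → ℝ} {m s δ : ℝ} (hδ : 0 < δ)
    (hS : MeasurableSet S) (hSω : thickening δ S ⊆ ω) (hωT : ω ⊆ T) (hT : volume T ≠ ∞)
    (hTpos : 0 < volume.real T) (hr : IntegrableOn r T) (hs : |s| = 1) (hm : 0 ≤ m)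
    (hmr : ∀ x ∈ thickening δ S, m ≤ s * r x) :
    ENNReal.ofReal (m * volume.real S / √((δ⁻¹ ^ 2 + κ ^ 2) * volume.real T))
      ≤ dualNorm κ ω (fun φ => ∫ x in T, r x * φ x) := by
  set ψ : Euc d → ℝ := fun x => thickenedIndicator hδ S x
  have hlip : LipschitzWith δ.toNNReal⁻¹ ψ := lipschitzWith_thickenedIndicator hδ S
  have htest : IsTest ω ψ := ⟨⟨_, hlip⟩, fun x hx => by
    simp only [ψ, thickenedIndicator_zero hδ S (mt (@hSω x) hx), NNReal.coe_zero]⟩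
  have henergy : energySq κ ω ψ ≤ (δ⁻¹ ^ 2 + κ ^ 2) * volume.real T :=
    calc energySq κ ω ψ ≤ (δ⁻¹ ^ 2 + κ ^ 2) * volume.real ω := by
          simpa [hδ.le] using energySq_le_of_lipschitzWith (κ := κ) (M := 1)
            (measure_ne_top_of_subset hωT hT) hlip
            fun x _ => by simpa [ψ] using thickenedIndicator_le_one hδ S x
      _ ≤ (δ⁻¹ ^ 2 + κ ^ 2) * volume.real T := by gcongr
  have hpairing : m * volume.real S ≤ |∫ x in T, r x * ψ x| :=
    calc m * volume.real S ≤ ∫ x in T, s * r x * ψ x :=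
          mul_measureReal_le_setIntegral_mul_thickenedIndicator hm hδ hS
            ((self_subset_thickening hδ S).trans (hSω.trans hωT)) hT (hr.const_mul s) hmr
      _ = s * ∫ x in T, r x * ψ x := by simp only [mul_assoc, integral_const_mul]
      _ ≤ |∫ x in T, r x * ψ x| := by
          simpa only [abs_mul, hs, one_mul] using le_abs_self (s * ∫ x in T, r x * ψ x)
  have hhomogeneous : ∀ (c : ℝ) (φ : Euc d → ℝ),
      ∫ x in T, r x * (c • φ) x = c * ∫ x in T, r x * φ x := fun c φ => by
    simp only [Pi.smul_apply, smul_eq_mul, mul_left_comm, integral_const_mul]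
  refine le_trans (ENNReal.ofReal_le_ofReal ?_)
    (ofReal_abs_div_sqrt_le_dualNorm hhomogeneous htest (by positivity) henergy)
  gcongr

end Energy

section ConvexBody

variable {d : ℕ} {T : Set (Euc d)}

lemma ofReal_abs_mul_sqrt_measureReal_le_dualNorm (hT : IsCompact T) (hconv : Convex ℝ T)
    {κ K ρ : ℝ} (hK : 0 < K) (hρ : 0 < ρ) {c p : Euc d} (hball : ball c ρ ⊆ T)
    (hdiam : diam T ≤ K * (ρ / 8)) (r : Euc d →ᵃ[ℝ] ℝ) (hp : p ∈ T)
    (hmax : ∀ x ∈ T, |r x| ≤ |r p|) :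
    ENNReal.ofReal (|r p| * √(volume.real T) / (2 * K ^ d * √((ρ / 8)⁻¹ ^ 2 + κ ^ 2)))
      ≤ dualNorm κ (interior T) (fun φ => ∫ x in T, r x * φ x) := by
  obtain ⟨q, s, hs, hqT, hhalf⟩ := exists_ball_subset_half_abs_le hconv hball hp r hmax
  have hδ : 0 < ρ / 8 := by positivity
  have hthick : thickening (ρ / 8) (closedBall q (ρ / 8)) = ball q (ρ / 4) := by
    rw [thickening_closedBall hδ hδ.le]; congr 1; ring
  have hTpos : 0 < volume.real T :=
    ENNReal.toReal_pos ((measure_ball_pos volume c hρ).trans_le (measure_mono hball)).ne'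
      hT.measure_lt_top.ne
  have hvol : volume.real T ≤ K ^ d * volume.real (closedBall q (ρ / 8)) := by
    simpa using measureReal_le_pow_mul_closedBall volume hT.isBounded
      (hqT (mem_ball_self (by positivity))) hK.le hδ.le hdiam
  have hr : IntegrableOn r T :=
    r.continuous_of_finiteDimensional.continuousOn.integrableOn_compact hT
  refine le_trans (ENNReal.ofReal_le_ofReal ?_) (ofReal_mul_div_sqrt_le_dualNorm hδ
    measurableSet_closedBall (hthick.trans_subset (interior_maximal hqT isOpen_ball))
    interior_subset hT.measure_lt_top.ne hTpos hr hs (by positivity) (hthick ▸ hhalf))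
  rw [Real.sqrt_mul (by positivity), div_le_div_iff₀ (by positivity) (by positivity)]
  calc |r p| * √(volume.real T) * (√((ρ / 8)⁻¹ ^ 2 + κ ^ 2) * √(volume.real T))
      = |r p| * √((ρ / 8)⁻¹ ^ 2 + κ ^ 2) * volume.real T := by
        conv_rhs => rw [← Real.mul_self_sqrt hTpos.le]
        ring
    _ ≤ |r p| * √((ρ / 8)⁻¹ ^ 2 + κ ^ 2)
        * (K ^ d * volume.real (closedBall q (ρ / 8))) := by gcongr
    _ = |r p| / 2 * volume.real (closedBall q (ρ / 8))
        * (2 * K ^ d * √((ρ / 8)⁻¹ ^ 2 + κ ^ 2)) := by ring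

lemma ofReal_min_mul_sqrt_le_dualNorm (hT : IsCompact T) (hconv : Convex ℝ T) {κ K ρ : ℝ}
    (hκ : 0 < κ) (hK : 0 < K) (hρ : 0 < ρ) {c : Euc d} (hball : ball c ρ ⊆ T)
    (hdiam : diam T ≤ K * (ρ / 8)) (r : Euc d →ᵃ[ℝ] ℝ) :
    ENNReal.ofReal ((2 * K ^ d * √(K ^ 2 + 1))⁻¹ * min (diam T) κ⁻¹ * √(sqIntg T r))
      ≤ dualNorm κ (interior T) (fun φ => ∫ x in T, r x * φ x) := by
  obtain ⟨p, hp, hmax⟩ := hT.exists_isMaxOn ⟨c, hball (mem_ball_self hρ)⟩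
    r.continuous_of_finiteDimensional.abs.continuousOn
  have hnorm : √(sqIntg T r) ≤ |r p| * √(volume.real T) :=
    sqrt_sqIntg_le_of_abs_le hT.measure_lt_top.ne (abs_nonneg _) hmax
  have hweight : min (diam T) κ⁻¹ * √((ρ / 8)⁻¹ ^ 2 + κ ^ 2) ≤ √(K ^ 2 + 1) :=
    min_mul_sqrt_inv_sq_add_sq_le diam_nonneg hκ (by positivity) hdiam
  refine le_trans (ENNReal.ofReal_le_ofReal ?_)
    (ofReal_abs_mul_sqrt_measureReal_le_dualNorm hT hconv hK hρ hball hdiam r hp hmax)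
  rw [le_div_iff₀ (by positivity)]
  calc (2 * K ^ d * √(K ^ 2 + 1))⁻¹ * min (diam T) κ⁻¹ * √(sqIntg T r)
        * (2 * K ^ d * √((ρ / 8)⁻¹ ^ 2 + κ ^ 2))
      = (√(K ^ 2 + 1))⁻¹ * (min (diam T) κ⁻¹ * √((ρ / 8)⁻¹ ^ 2 + κ ^ 2))
        * √(sqIntg T r) := by field_simp
    _ ≤ (√(K ^ 2 + 1))⁻¹ * √(K ^ 2 + 1) * (|r p| * √(volume.real T)) := by gcongr
    _ = |r p| * √(volume.real T) := by rw [inv_mul_cancel₀ (by positivity), one_mul]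

lemma inradius_nonneg (T : Set (Euc d)) : 0 ≤ inradius T :=
  Real.sSup_nonneg' ⟨0, ⟨0, by simp⟩, le_rfl⟩

lemma exists_ball_subset_half_inradius_lt (hpos : 0 < inradius T) :
    ∃ c ρ, inradius T / 2 < ρ ∧ ball c ρ ⊆ T := by
  obtain ⟨ρ, ⟨c, hc⟩, hρ⟩ :=
    exists_lt_of_lt_csSup (s := {r : ℝ | ∃ c, ball c r ⊆ T}) ⟨0, 0, by simp⟩ (half_lt_self hpos)
  exact ⟨c, ρ, hρ, hc⟩

lemma exists_ball_subset_diam_le {μ : ℝ} (hdiam : 0 < diam T) (hshape : diam T ≤ μ * inradius T) :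
    ∃ c ρ, 0 < ρ ∧ ball c ρ ⊆ T ∧ diam T ≤ 2 * μ * ρ := by
  have hprod : 0 < μ * inradius T := hdiam.trans_le hshape
  have hμ : 0 < μ := pos_of_mul_pos_left hprod (inradius_nonneg T)
  have hpos : 0 < inradius T := pos_of_mul_pos_right hprod hμ.le
  obtain ⟨c, ρ, hρ, hc⟩ := exists_ball_subset_half_inradius_lt hpos
  refine ⟨c, ρ, (half_pos hpos).trans hρ, hc, hshape.trans ?_⟩
  calc μ * inradius T ≤ μ * (2 * ρ) := by gcongr; linarith
    _ = 2 * μ * ρ := by ring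

end ConvexBody

theorem element_residual_two_sided_general (d : ℕ) (hd : 1 ≤ d) (μ : ℝ) :
    ∃ c C : ℝ, 0 < c ∧ 0 < C ∧ ∀ κ : ℝ, 0 < κ →
      ∀ T : Set (Euc d), IsCompact T → Convex ℝ T → diam T ≤ μ * inradius T →
        ∀ r : Euc d →ᵃ[ℝ] ℝ,
          ENNReal.ofReal (c * min (diam T) κ⁻¹ * √(sqIntg T r))
            ≤ dualNorm κ (interior T) (fun φ => ∫ x in T, r x * φ x) ∧
          dualNorm κ (interior T) (fun φ => ∫ x in T, r x * φ x)
            ≤ ENNReal.ofReal (C * min (diam T) κ⁻¹ * √(sqIntg T r)) := by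
  have : NeZero d := ⟨by omega⟩
  set K := 16 * |μ| + 1
  refine ⟨(2 * K ^ d * √(K ^ 2 + 1))⁻¹, 2, by positivity, two_pos, ?_⟩
  intro κ hκ T hT hconv hshape r
  constructor
  · rcases (diam_nonneg (s := T)).eq_or_lt with hzero | hpos
    · rw [← hzero, min_eq_left (by positivity)]
      simp
    obtain ⟨c, ρ, hρ, hball, hdiam⟩ := exists_ball_subset_diam_le hpos hshape
    have hKdiam : diam T ≤ K * (ρ / 8) := by
      refine hdiam.trans ?_
      nlinarith [le_abs_self μ]
    exact ofReal_min_mul_sqrt_le_dualNorm hT hconv hκ (by positivity) hρ hball hKdiam r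
  · have hrcont : Continuous r := r.continuous_of_finiteDimensional
    have hr : MemLp r 2 (volume.restrict T) :=
      (memLp_two_iff_integrable_sq hrcont.aestronglyMeasurable).2
        ((hrcont.pow 2).continuousOn.integrableOn_compact hT)
    refine (dualNorm_setIntegral_mul_le hκ (hT.isBounded.subset interior_subset)
      isOpen_interior.measurableSet interior_subset hr).trans (ENNReal.ofReal_le_ofReal ?_)
    gcongr
    exact diam_mono interior_subset hT.isBounded

/-- two-sided robust bound for the element residual. For a
nondegenerate `d`-simplex `T` with shape parameter `≤ μ` and every affine `r`, the local
dual energy norm of `φ ↦ ∫_T r φ` over `int T` is equivalent to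
`min{h_T, κ⁻¹} ‖r‖_{L²(T)}`, with constants `c, C` depending only on `d` and `μ`. -/
theorem element_residual_two_sided (d : ℕ) (hd : 1 ≤ d) (μ : ℝ) :
    ∃ c C : ℝ, 0 < c ∧ 0 < C ∧ ∀ κ : ℝ, 0 < κ →
      ∀ B : AffineBasis (Fin (d + 1)) ℝ (Euc d),
        Metric.diam (simT B) ≤ μ * inradius (simT B) →
        ∀ r : Euc d →ᵃ[ℝ] ℝ,
          ENNReal.ofReal (c * min (Metric.diam (simT B)) κ⁻¹
              * Real.sqrt (sqIntg (simT B) (fun x => r x)))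
            ≤ dualNorm κ (interior (simT B)) (fun φ => ∫ x in simT B, r x * φ x) ∧
          dualNorm κ (interior (simT B)) (fun φ => ∫ x in simT B, r x * φ x)
            ≤ ENNReal.ofReal (C * min (Metric.diam (simT B)) κ⁻¹
                * Real.sqrt (sqIntg (simT B) (fun x => r x))) := by
  obtain ⟨c, C, hc, hC, hbound⟩ := element_residual_two_sided_general d hd μ
  exact ⟨c, C, hc, hC, fun κ hκ B => hbound κ hκ (simT B)
    ((finite_range B).isCompact_convexHull ℝ) (convex_convexHull ℝ _)⟩
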